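/- Let d ≥ 2 and γ ∈ ℝ with d + γ > 2. Define ψ_γ(ρ) = F(-γ/2, (2-γ-d)/2; d/2; ρ) for 0 ≤ ρ < 1 and ψ_γ(ρ) = ρ^{γ/2} F(-γ/2, (2-γ-d)/2; d/2; ρ^{-1}) for ρ > 1. Then ψ_γ extends to a continuously differentiable function on [0,∞) with ψ_γ(1) = Γ(d/2)Γ(d+γ-1)/(Γ((d+γ)/2)Γ((2d+γ-2)/2)) and ψ_γ'(1) = (γ/2)·Γ(d/2)Γ(d+γ-2)/(Γ((d+γ-2)/2)Γ((2d+γ-2)/2)). -/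

import Mathlib

open Real Set MeasureTheory

/-- Pochhammer symbol (rising factorial) for a real argument. -/
noncomputable def poch (x : ℝ) (n : ℕ) : ℝ := ∏ i ∈ Finset.range n, (x + i)

/-- Gauss hypergeometric series. -/
noncomputable def hyperF (a b c z : ℝ) : ℝ :=
  ∑' n : ℕ, poch a n * poch b n / (poch c n * (n.factorial : ℝ)) * z ^ n


open Filter Topology

noncomputable def uu (a b c : ℝ) (n : ℕ) : ℝ := poch a n * poch b n / (poch c n * (n.factorial : ℝ))

lemma poch_succ (x : ℝ) (n : ℕ) : poch x (n+1) = poch x n * (x + n) := by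
  simp [poch, Finset.prod_range_succ]

lemma poch_succ_left (x : ℝ) (n : ℕ) : poch x (n+1) = x * poch (x+1) n := by
  simp only [poch, Finset.prod_range_succ']
  rw [mul_comm]
  simp only [Nat.cast_zero, add_zero]
  congr 1
  apply Finset.prod_congr rfl
  intro i _
  push_cast; ring

lemma poch_pos {x : ℝ} (hx : 0 < x) (n : ℕ) : 0 < poch x n := by
  apply Finset.prod_pos
  intro i _
  positivity

lemma uu_rec (a b : ℝ) {c : ℝ} (hc : 0 < c) (n : ℕ) :
    ((n : ℝ) + 1) * uu a b c (n+1) = uu a b c n * ((a + n) * (b + n) / (c + n)) := by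
  have h1 := (poch_pos hc n).ne'
  have h2 : c + n ≠ 0 := by positivity
  have h3 : (n.factorial : ℝ) ≠ 0 := by positivity
  have h4 : (n : ℝ) + 1 ≠ 0 := by positivity
  simp only [uu, poch_succ, Nat.factorial_succ]
  push_cast
  field_simp

lemma uu_shift (a b : ℝ) {c : ℝ} (hc : 0 < c) (n : ℕ) :
    ((n : ℝ) + 1) * uu a b c (n+1) = a * b / c * uu (a+1) (b+1) (c+1) n := by
  have h1 := (poch_pos (x := c+1) (by positivity) n).ne'
  have h3 : (n.factorial : ℝ) ≠ 0 := by positivity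
  have h4 : (n : ℝ) + 1 ≠ 0 := by positivity
  simp only [uu, poch_succ_left, Nat.factorial_succ]
  push_cast
  field_simp

lemma uu_c_succ (a b : ℝ) {c : ℝ} (hc : 0 < c) (n : ℕ) :
    uu a b (c+1) n = uu a b c n * (c / (c + n)) := by
  have h1 := (poch_pos hc n).ne'
  have h1' := (poch_pos (x := c+1) (by positivity) n).ne'
  have h2 : c + n ≠ 0 := by positivity
  have h3 : (n.factorial : ℝ) ≠ 0 := by positivity
  have h := (poch_succ c n).symm.trans (poch_succ_left c n)
  simp only [uu]
  field_simp
  linear_combination (poch a n * poch b n) * h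

lemma uu_summable (a b : ℝ) {c : ℝ} (hc : 0 < c) (hs : 0 < c - a - b) :
    Summable (fun n => |uu a b c n|) := by
  set s := c - a - b with hsd
  have hev : ∀ᶠ n : ℕ in atTop, 0 ≤ a + n ∧ 0 ≤ b + n ∧ s / 2 * (c + n) ≤ s * n - a * b := by
    have ht := tendsto_natCast_atTop_atTop (R := ℝ)
    filter_upwards [ht.eventually_ge_atTop (-a), ht.eventually_ge_atTop (-b),
      ht.eventually_ge_atTop ((s / 2 * c + a * b) / (s / 2))] with n h1 h2 h3
    refine ⟨by linarith, by linarith, ?_⟩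
    rw [div_le_iff₀ (by positivity)] at h3
    nlinarith
  obtain ⟨N, hN⟩ := eventually_atTop.1 hev
  rw [← summable_nat_add_iff N]
  have key : ∀ n ≥ N, s / 2 * |uu a b c n| ≤ n * |uu a b c n| - ((n+1 : ℕ):ℝ) * |uu a b c (n+1)| := by
    intro n hn
    obtain ⟨h1, h2, h3⟩ := hN n hn
    have hcn : 0 < c + n := by positivity
    have e : ((n+1 : ℕ):ℝ) * |uu a b c (n+1)| = |uu a b c n| * ((a + n) * (b + n) / (c + n)) := by
      have := congrArg abs (uu_rec a b hc n)
      rw [abs_mul, abs_mul, abs_of_nonneg (a := (n:ℝ) + 1) (by positivity),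
        abs_of_nonneg (a := (a + n) * (b + n) / (c + n)) (by positivity)] at this
      push_cast; exact this
    rw [e]
    have : s / 2 ≤ n - (a + n) * (b + n) / (c + n) := by
      rw [le_sub_iff_add_le, ← le_sub_iff_add_le', div_le_iff₀ hcn]
      nlinarith
    nlinarith [abs_nonneg (uu a b c n)]
  refine summable_of_sum_range_le (c := (N * |uu a b c N|) / (s/2)) (fun n => abs_nonneg _) ?_
  intro m
  have : ∀ m : ℕ, s / 2 * ∑ i ∈ Finset.range m, |uu a b c (i + N)| ≤
      N * |uu a b c N| - ((m + N : ℕ) : ℝ) * |uu a b c (m+N)| := by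
    intro m
    induction m with
    | zero => simp
    | succ k ih =>
      rw [Finset.sum_range_succ, mul_add]
      have := key (k+N) (by omega)
      rw [show k + 1 + N = k + N + 1 by ring]
      linarith
  rw [le_div_iff₀ (by positivity)]
  have h := this m
  have : 0 ≤ ((m + N : ℕ) : ℝ) * |uu a b c (m+N)| := by positivity
  linarith

lemma uu_telescope (a b : ℝ) {c : ℝ} (hc : 0 < c) (n : ℕ) :
    (c - a - b) * uu a b c n - (c - a) * (c - b) / c * uu a b (c+1) n =
      n * uu a b c n - ((n+1 : ℕ) : ℝ) * uu a b c (n+1) := by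
  have h2 : c + n ≠ 0 := by positivity
  push_cast
  rw [uu_rec a b hc, uu_c_succ a b hc]
  field_simp
  ring

lemma gauss_contig (a b : ℝ) {c : ℝ} (hc : 0 < c) (hs : 0 < c - a - b) :
    (c - a - b) * ∑' n, uu a b c n = (c - a) * (c - b) / c * ∑' n, uu a b (c+1) n := by
  have s1 : Summable (uu a b c) := (uu_summable a b hc hs).of_abs
  have s2 : Summable (uu a b (c+1)) :=
    (uu_summable a b (c := c+1) (by positivity) (by linarith)).of_abs
  have hh := (s1.hasSum.mul_left (c - a - b)).sub (s2.hasSum.mul_left ((c - a) * (c - b) / c))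
  set L := (c - a - b) * ∑' n, uu a b c n - (c - a) * (c - b) / c * ∑' n, uu a b (c+1) n with hL
  have ht := hh.tendsto_sum_nat
  have e : ∀ m : ℕ, ∑ n ∈ Finset.range m, ((c - a - b) * uu a b c n - (c - a) * (c - b) / c * uu a b (c+1) n) = - (m * uu a b c m) := by
    intro m
    simp_rw [uu_telescope a b hc]
    rw [Finset.sum_range_sub' (fun n : ℕ => (n : ℝ) * uu a b c n)]
    simp
  simp_rw [e] at ht
  have hL0 : L = 0 := by
    by_contra hne
    have habs := ht.abs
    have hpos : 0 < |L| := abs_pos.2 hne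
    have hev : ∀ᶠ m : ℕ in atTop, |L| / 2 < |-(m * uu a b c m)| :=
      habs.eventually_const_lt (by linarith)
    refine Real.not_summable_one_div_natCast ?_
    have hS : Summable (fun n => 2 / |L| * |uu a b c n|) := (uu_summable a b hc hs).mul_left _
    refine hS.of_norm_bounded_eventually_nat ?_
    filter_upwards [hev, eventually_gt_atTop 0] with m hm hm0
    have hm' : (0:ℝ) < m := by exact_mod_cast hm0
    rw [abs_neg, abs_mul, abs_of_pos hm'] at hm
    rw [Real.norm_of_nonneg (by positivity), div_le_iff₀ hm', div_mul_eq_mul_div, div_mul_eq_mul_div,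
      le_div_iff₀ hpos]
    linarith
  linarith

lemma gauss_iter (a b : ℝ) {c : ℝ} (hc : 0 < c) (hs : 0 < c - a - b) (N : ℕ) :
    poch c N * poch (c - a - b) N * ∑' n, uu a b c n =
      poch (c-a) N * poch (c-b) N * ∑' n, uu a b (c+N) n := by
  induction N with
  | zero => simp [poch]
  | succ k ih =>
    have hk : 0 < c + k := by positivity
    have h := gauss_contig a b (c := c + k) hk (by have : (0:ℝ) ≤ k := by positivity
                                                   linarith)
    have h2 : (c + k) * ((c + k - a - b) * ∑' n, uu a b (c + k) n) =
        (c + k - a) * (c + k - b) * ∑' n, uu a b (c+k+1) n := by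
      rw [h]; field_simp
    simp only [poch_succ]
    push_cast
    rw [← add_assoc]
    linear_combination (c + k) * (c - a - b + k) * ih + poch (c-a) k * poch (c-b) k * h2

lemma gauss_lim (a b : ℝ) {c : ℝ} (hc : 0 < c) (hs : 0 < c - a - b) :
    Tendsto (fun N : ℕ => ∑' n, uu a b (c+N) n) atTop (𝓝 1) := by
  have : (1:ℝ) = ∑' n : ℕ, if n = 0 then (1:ℝ) else 0 := by simp
  rw [this]
  have hle : ∀ N n : ℕ, poch c n ≤ poch (c + N) n := by
    intro N n
    unfold poch
    apply Finset.prod_le_prod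
    · intro i _; positivity
    · intro i _
      have : (0:ℝ) ≤ N := by positivity
      linarith
  refine tendsto_tsum_of_dominated_convergence (uu_summable a b hc hs) ?_ ?_
  · intro n
    rcases n with _ | n
    · simp [uu, poch]
    · simp only [Nat.add_eq_zero_iff, one_ne_zero, and_false, if_false]
      have h1 : Tendsto (fun N : ℕ => poch (c + N) (n+1)) atTop atTop := by
        refine tendsto_atTop_mono (f := fun N : ℕ => (N : ℝ) * poch (c+1) n) ?_ ?_
        · intro N
          rw [poch_succ_left]
          have : poch (c+1) n ≤ poch (c+N+1) n := by
            unfold poch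
            apply Finset.prod_le_prod
            · intro i _; positivity
            · intro i _
              have : (0:ℝ) ≤ N := by positivity
              linarith
          have h0 := poch_pos (x := c+1) (by positivity) n
          apply mul_le_mul _ this h0.le (by positivity)
          linarith
        · exact tendsto_natCast_atTop_atTop.atTop_mul_const (poch_pos (by positivity) n)
      have h2 := (h1.atTop_mul_const (r := ((n+1).factorial : ℝ)) (by positivity))
      exact h2.const_div_atTop _
  · refine Eventually.of_forall fun N n => ?_
    have p1 := poch_pos hc n
    have p2 := poch_pos (x := c + N) (by positivity) n
    rw [Real.norm_eq_abs]
    unfold uu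
    rw [abs_div, abs_div, abs_of_pos (a := poch c n * _) (by positivity),
      abs_of_pos (a := poch (c+N) n * _) (by positivity)]
    have := hle N n
    gcongr

lemma gauss_sum (a b : ℝ) {c : ℝ} (hc : 0 < c) (hs : 0 < c - a - b) (ha : 0 < c - a) (hb : 0 < c - b) :
    ∑' n, uu a b c n = Real.Gamma c * Real.Gamma (c - a - b) / (Real.Gamma (c-a) * Real.Gamma (c-b)) := by
  have ga := (Real.Gamma_pos_of_pos ha).ne'
  have gb := (Real.Gamma_pos_of_pos hb).ne'
  have T := ((Real.GammaSeq_tendsto_Gamma c).mul (Real.GammaSeq_tendsto_Gamma (c-a-b))).div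
    ((Real.GammaSeq_tendsto_Gamma (c-a)).mul (Real.GammaSeq_tendsto_Gamma (c-b))) (mul_ne_zero ga gb)
  have T2 := T.mul ((gauss_lim a b hc hs).comp (tendsto_add_atTop_nat 1))
  rw [mul_one] at T2
  refine tendsto_nhds_unique (tendsto_const_nhds.congr' ?_) T2
  filter_upwards [eventually_gt_atTop 0] with n hn
  have hn' : (0:ℝ) < n := by exact_mod_cast hn
  have h := gauss_iter a b hc hs (n+1)
  have p1 := (poch_pos hc (n+1)).ne'
  have p2 := (poch_pos hs (n+1)).ne'
  have p3 := (poch_pos ha (n+1)).ne'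
  have p4 := (poch_pos hb (n+1)).ne'
  have hg : ∀ x : ℝ, Real.GammaSeq x n = (n:ℝ)^x * n.factorial / poch x (n+1) := fun x => rfl
  have hf : (n.factorial : ℝ) ≠ 0 := by positivity
  have hpow : (n:ℝ)^c * (n:ℝ)^(c-a-b) = (n:ℝ)^(c-a) * (n:ℝ)^(c-b) := by
    rw [← Real.rpow_add hn', ← Real.rpow_add hn']; congr 1; ring
  have q1 := (Real.rpow_pos_of_pos hn' (c-a)).ne'
  have q2 := (Real.rpow_pos_of_pos hn' (c-b)).ne'
  simp only [Pi.div_apply, Function.comp, hg]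
  have e : (n:ℝ)^c * n.factorial / poch c (n+1) * ((n:ℝ)^(c-a-b) * n.factorial / poch (c-a-b) (n+1)) /
    ((n:ℝ)^(c-a) * n.factorial / poch (c-a) (n+1) * ((n:ℝ)^(c-b) * n.factorial / poch (c-b) (n+1)))
     = (poch (c-a) (n+1) * poch (c-b) (n+1)) / (poch c (n+1) * poch (c-a-b) (n+1)) := by
    field_simp
    linear_combination hpow
  rw [e, div_mul_eq_mul_div, eq_div_iff (mul_ne_zero p1 p2)]
  linarith

lemma hyperF_one (a b c : ℝ) : hyperF a b c 1 = ∑' n, uu a b c n := by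
  simp [hyperF, uu]

lemma hyperF_cont (a b : ℝ) {c : ℝ} (hc : 0 < c) (hs : 0 < c - a - b) :
    ContinuousOn (hyperF a b c) (Set.Icc (-1) 1) := by
  refine continuousOn_tsum (f := fun n x => uu a b c n * x ^ n) (fun n => by fun_prop)
    (uu_summable a b hc hs) ?_
  intro n x hx
  have : |x| ≤ 1 := abs_le.2 hx
  rw [norm_mul, Real.norm_eq_abs, norm_pow, Real.norm_eq_abs]
  exact mul_le_of_le_one_right (abs_nonneg _) (pow_le_one₀ (abs_nonneg _) this)

lemma hyperF_deriv (a b : ℝ) {c : ℝ} (hc : 0 < c) (hs : 1 < c - a - b) {x : ℝ}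
    (hx : x ∈ Set.Ioo (-1 : ℝ) 1) :
    HasDerivAt (hyperF a b c) (a * b / c * hyperF (a+1) (b+1) (c+1) x) x := by
  have hsum : Summable (fun n : ℕ => |(n : ℝ) * uu a b c n|) := by
    rw [← summable_nat_add_iff 1]
    have h := (uu_summable (a+1) (b+1) (c := c+1) (by positivity) (by linarith)).mul_left |a * b / c|
    refine h.congr fun n => ?_
    push_cast
    rw [uu_shift a b hc, abs_mul]
  have hbd : ∀ (n : ℕ) (y : ℝ), y ∈ Set.Ioo (-1 : ℝ) 1 →
      ‖uu a b c n * ((n : ℝ) * y ^ (n - 1))‖ ≤ |(n : ℝ) * uu a b c n| := by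
    intro n y hy
    have : |y| ≤ 1 := abs_le.2 ⟨hy.1.le, hy.2.le⟩
    rw [show uu a b c n * ((n : ℝ) * y ^ (n - 1)) = ((n : ℝ) * uu a b c n) * y ^ (n-1) by ring,
      norm_mul, Real.norm_eq_abs, norm_pow, Real.norm_eq_abs]
    exact mul_le_of_le_one_right (abs_nonneg _) (pow_le_one₀ (abs_nonneg _) this)
  have h := hasDerivAt_tsum_of_isPreconnected (g := fun n x => uu a b c n * x ^ n)
    (g' := fun n y => uu a b c n * ((n : ℝ) * y ^ (n - 1))) (y₀ := 0) (y := x)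
    hsum isOpen_Ioo isPreconnected_Ioo
    (fun n y _ => (hasDerivAt_pow n y).const_mul _) hbd (by simp)
    (by refine (summable_of_ne_finset_zero (s := {0}) ?_)
        intro n hn
        simp at hn
        simp [hn]) hx
  refine HasDerivAt.congr_deriv (f := hyperF a b c) h ?_
  have hS : Summable (fun n : ℕ => uu a b c n * ((n : ℝ) * x ^ (n - 1))) :=
    .of_norm_bounded hsum fun n => hbd n x hx
  rw [hS.tsum_eq_zero_add]
  simp only [Nat.cast_zero, zero_mul, mul_zero, zero_add, Nat.add_sub_cancel]
  unfold hyperF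
  rw [← tsum_mul_left]
  congr 1
  ext n
  have := uu_shift a b hc n
  push_cast
  change _ = a * b / c * (uu (a+1) (b+1) (c+1) n * x ^ n)
  linear_combination (x ^ n) * this

lemma glue (G G1 : ℝ → ℝ) (k : ℝ) (hG : ContinuousOn G (Set.Icc (-1) 1))
    (hG1 : ContinuousOn G1 (Set.Icc (-1) 1))
    (hd : ∀ x ∈ Set.Ioo (-1 : ℝ) 1, HasDerivAt G (G1 x) x) (hk : k * G 1 = 2 * G1 1) :
    ∃ ψ : ℝ → ℝ, (∀ x ≤ 1, ψ x = G x) ∧ (∀ x, 1 < x → ψ x = x ^ k * G x⁻¹) ∧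
      ContDiffOn ℝ 1 ψ (Set.Ioi (-1)) ∧ deriv ψ 1 = G1 1 := by
  set ψ : ℝ → ℝ := fun x => G (min x 1) + (max x 1) ^ k * G (max x 1)⁻¹ - G 1 with hψ
  set ψ' : ℝ → ℝ := fun x => G1 (min x 1) + (k * (max x 1) ^ (k-1) * G (max x 1)⁻¹ -
    (max x 1) ^ k * (G1 (max x 1)⁻¹ * ((max x 1) ^ 2)⁻¹)) - G1 1 with hψ'
  have e1 : ∀ x ≤ 1, ψ x = G x := by
    intro x hx
    simp [hψ, min_eq_left hx, max_eq_right hx]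
  have e2 : ∀ x, 1 < x → ψ x = x ^ k * G x⁻¹ := by
    intro x hx
    simp [hψ, min_eq_right hx.le, max_eq_left hx.le]
  have d1 : ∀ x ≤ 1, ψ' x = G1 x := by
    intro x hx
    simp [hψ', min_eq_left hx, max_eq_right hx]
    linarith
  have d2 : ∀ x, 1 < x → ψ' x = k * x ^ (k-1) * G x⁻¹ - x ^ k * (G1 x⁻¹ * (x ^ 2)⁻¹) := by
    intro x hx
    simp [hψ', min_eq_right hx.le, max_eq_left hx.le]
  have m1 : ∀ x ∈ Set.Ioi (-1 : ℝ), min x 1 ∈ Set.Icc (-1 : ℝ) 1 := by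
    intro x hx
    exact ⟨le_min (le_of_lt hx) (by norm_num), min_le_right _ _⟩
  have m2 : ∀ x ∈ Set.Ioi (-1 : ℝ), (max x 1)⁻¹ ∈ Set.Icc (-1 : ℝ) 1 := by
    intro x hx
    have : 1 ≤ max x 1 := le_max_right _ _
    refine ⟨?_, inv_le_one_of_one_le₀ this⟩
    have : 0 ≤ (max x 1)⁻¹ := by positivity
    linarith
  have hM : ∀ x : ℝ, max x 1 ≠ 0 := fun x => (lt_of_lt_of_le one_pos (le_max_right x 1)).ne'
  have cm : Continuous (fun x : ℝ => max x 1) := by fun_prop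
  have ci : Continuous (fun x : ℝ => (max x 1)⁻¹) := cm.inv₀ hM
  have cp : ∀ p : ℝ, Continuous (fun x : ℝ => (max x 1) ^ p) := fun p =>
    cm.rpow_const fun x => Or.inl (hM x)
  have cG : ContinuousOn (fun x => G (max x 1)⁻¹) (Set.Ioi (-1)) := hG.comp ci.continuousOn m2
  have cG1 : ContinuousOn (fun x => G1 (max x 1)⁻¹) (Set.Ioi (-1)) := hG1.comp ci.continuousOn m2
  have cψ : ContinuousOn ψ (Set.Ioi (-1)) := by
    refine ((hG.comp (f := fun x : ℝ => min x 1) (by fun_prop) m1).add ?_).sub continuousOn_const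
    exact (cp k).continuousOn.mul cG
  have cψ' : ContinuousOn ψ' (Set.Ioi (-1)) := by
    refine ((hG1.comp (f := fun x : ℝ => min x 1) (by fun_prop) m1).add ?_).sub continuousOn_const
    refine (((continuousOn_const.mul (cp (k-1)).continuousOn).mul cG)).sub
      ((cp k).continuousOn.mul (cG1.mul ?_))
    exact ((cm.pow 2).inv₀ fun x => pow_ne_zero 2 (hM x)).continuousOn
  have D1 : ∀ x ∈ Set.Ioo (-1 : ℝ) 1, HasDerivAt ψ (ψ' x) x := by
    intro x hx
    rw [d1 x hx.2.le]
    refine (hd x hx).congr_of_eventuallyEq ?_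
    filter_upwards [Iio_mem_nhds hx.2] with y hy using e1 y (le_of_lt hy)
  have D2 : ∀ x, 1 < x → HasDerivAt ψ (ψ' x) x := by
    intro x hx
    have hx0 : 0 < x := by linarith
    rw [d2 x hx]
    have hi : x⁻¹ ∈ Set.Ioo (-1 : ℝ) 1 := by
      refine ⟨?_, inv_lt_one_of_one_lt₀ hx⟩
      have : 0 < x⁻¹ := by positivity
      linarith
    have h := (Real.hasDerivAt_rpow_const (p := k) (Or.inl hx0.ne')).mul
      ((hd _ hi).comp x (hasDerivAt_inv hx0.ne'))
    have h' : HasDerivAt (fun x => x ^ k * G x⁻¹)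
        (k * x ^ (k-1) * G x⁻¹ - x ^ k * (G1 x⁻¹ * (x ^ 2)⁻¹)) x := by
      refine HasDerivAt.congr_deriv h ?_
      simp only [Function.comp]
      ring
    refine h'.congr_of_eventuallyEq ?_
    filter_upwards [Ioi_mem_nhds hx] with y hy using e2 y hy
  have one_mem : (1:ℝ) ∈ Set.Ioi (-1 : ℝ) := by simp
  have c1 : ContinuousAt ψ 1 := cψ.continuousAt (Ioi_mem_nhds (by norm_num))
  have c1' : ContinuousAt ψ' 1 := cψ'.continuousAt (Ioi_mem_nhds (by norm_num))
  have hone : HasDerivAt ψ (ψ' 1) 1 := by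
    have hl : HasDerivWithinAt ψ (ψ' 1) (Set.Iic 1) 1 := by
      refine hasDerivWithinAt_Iic_of_tendsto_deriv (s := Set.Ioo (-1) 1)
        (fun x hx => (D1 x hx).differentiableAt.differentiableWithinAt) c1.continuousWithinAt
        (Ioo_mem_nhdsLT (by norm_num)) ?_
      refine (c1'.tendsto.mono_left nhdsWithin_le_nhds).congr' ?_
      filter_upwards [Ioo_mem_nhdsLT (show (-1:ℝ) < 1 by norm_num)] with x hx using (D1 x hx).deriv.symm
    have hr : HasDerivWithinAt ψ (ψ' 1) (Set.Ici 1) 1 := by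
      refine hasDerivWithinAt_Ici_of_tendsto_deriv (s := Set.Ioi 1)
        (fun x hx => (D2 x hx).differentiableAt.differentiableWithinAt) c1.continuousWithinAt
        self_mem_nhdsWithin ?_
      refine (c1'.tendsto.mono_left nhdsWithin_le_nhds).congr' ?_
      filter_upwards [self_mem_nhdsWithin] with x hx using (D2 x hx).deriv.symm
    simpa using hl.union hr
  have D : ∀ x ∈ Set.Ioi (-1 : ℝ), HasDerivAt ψ (ψ' x) x := by
    intro x hx
    rcases lt_trichotomy x 1 with h | h | h
    · exact D1 x ⟨hx, h⟩
    · rw [h]; exact hone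
    · exact D2 x h
  refine ⟨ψ, e1, e2, ?_, ?_⟩
  · rw [contDiffOn_one_iff_derivWithin isOpen_Ioi.uniqueDiffOn]
    refine ⟨fun x hx => (D x hx).differentiableAt.differentiableWithinAt, cψ'.congr fun x hx => ?_⟩
    rw [derivWithin_of_isOpen isOpen_Ioi hx, (D x hx).deriv]
  · rw [hone.deriv, d1 1 le_rfl]

theorem psi_C1_extension (d : ℕ) (hd : 2 ≤ d) (γ : ℝ) (hγ : 2 < (d : ℝ) + γ) :
    ∃ ψ : ℝ → ℝ,
      (∀ ρ ∈ Set.Ico (0 : ℝ) 1,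
        ψ ρ = hyperF (-γ / 2) ((2 - γ - (d : ℝ)) / 2) ((d : ℝ) / 2) ρ) ∧
      (∀ ρ : ℝ, 1 < ρ →
        ψ ρ = ρ ^ (γ / 2) * hyperF (-γ / 2) ((2 - γ - (d : ℝ)) / 2) ((d : ℝ) / 2) ρ⁻¹) ∧
      ContDiffOn ℝ 1 ψ (Set.Ici 0) ∧
      ψ 1 = Real.Gamma ((d : ℝ) / 2) * Real.Gamma ((d : ℝ) + γ - 1) /
        (Real.Gamma (((d : ℝ) + γ) / 2) * Real.Gamma ((2 * (d : ℝ) + γ - 2) / 2)) ∧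
      deriv ψ 1 = γ / 2 * (Real.Gamma ((d : ℝ) / 2) * Real.Gamma ((d : ℝ) + γ - 2) /
        (Real.Gamma (((d : ℝ) + γ - 2) / 2) * Real.Gamma ((2 * (d : ℝ) + γ - 2) / 2))) := by
  have hd' : (2:ℝ) ≤ d := by exact_mod_cast hd
  set a := -γ / 2 with ha
  set b := (2 - γ - (d : ℝ)) / 2 with hb
  set c := (d : ℝ) / 2 with hc
  have hc0 : 0 < c := by rw [hc]; linarith
  have hs : 1 < c - a - b := by rw [ha, hb, hc]; linarith
  have hca : 0 < c - a := by rw [ha, hc]; linarith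
  have hcb : 0 < c - b := by rw [hb, hc]; linarith
  have g0 := gauss_sum a b hc0 (by linarith) hca hcb
  have g1 := gauss_sum (a+1) (b+1) (c := c+1) (by linarith) (by linarith) (by linarith) (by linarith)
  rw [← hyperF_one] at g0 g1
  have E1 : c + 1 - (a+1) = c - a := by ring
  have E2 : c + 1 - (b+1) = c - b := by ring
  have E3 : c + 1 - (a+1) - (b+1) = c - a - b - 1 := by ring
  rw [E3, E1, E2, Real.Gamma_add_one hc0.ne'] at g1
  have gs : Real.Gamma (c - a - b) = (c - a - b - 1) * Real.Gamma (c - a - b - 1) := by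
    rw [← Real.Gamma_add_one (by linarith)]; congr 1; ring
  have ga : Real.Gamma (c - a) = (c - a - 1) * Real.Gamma (c - a - 1) := by
    rw [← Real.Gamma_add_one (by rw [ha, hc]; linarith)]; congr 1; ring
  have pa := (Real.Gamma_pos_of_pos (s := c - a - 1) (by rw [ha, hc]; linarith)).ne'
  have pb := (Real.Gamma_pos_of_pos hcb).ne'
  have hca1 : c - a - 1 ≠ 0 := by rw [ha, hc]; linarith
  have hbb : b = - (c - a - 1) := by rw [ha, hb, hc]; ring
  have hbs : 2 * b = - (c - a - b - 1) := by rw [ha, hb, hc]; ring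
  have haa : γ / 2 = -a := by rw [ha]; ring
  obtain ⟨ψ, h1, h2, h3, h4⟩ := glue (hyperF a b c) (fun x => a * b / c * hyperF (a+1) (b+1) (c+1) x)
    (γ/2) (hyperF_cont a b hc0 (by linarith))
    (continuousOn_const.mul (hyperF_cont (a+1) (b+1) (by linarith) (by linarith)))
    (fun x hx => hyperF_deriv a b hc0 hs hx) (by
      rw [g0, g1, gs, ga, haa]
      field_simp
      linear_combination (-a * Real.Gamma (c - a - b - 1) * Real.Gamma c) * hbs)
  refine ⟨ψ, fun ρ hρ => h1 ρ hρ.2.le, h2, h3.mono fun x hx => ?_, ?_, ?_⟩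
  · have : (0:ℝ) ≤ x := hx
    show -1 < x
    linarith
  · rw [h1 1 le_rfl, g0]
    rw [show (d:ℝ) + γ - 1 = c - a - b by (simp only [ha, hb, hc]; ring),
      show ((d:ℝ) + γ)/2 = c - a by (simp only [ha, hc]; ring),
      show (2 * (d:ℝ) + γ - 2) / 2 = c - b by (simp only [hb, hc]; ring)]
  · rw [h4, show (d:ℝ) + γ - 2 = c - a - b - 1 by (simp only [ha, hb, hc]; ring),
      show (c - a - b - 1)/2 = c - a - 1 by (simp only [ha, hb, hc]; ring),
      show (2 * (d:ℝ) + γ - 2) / 2 = c - b by (simp only [hb, hc]; ring), haa]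
    rw [g1, ga]
    field_simp
    linear_combination hbb
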